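/- Let p₁, p₂ ∈ ℝ[λ] satisfy p₁(0) = p₂(0) = 0 and let k ≤ ℓ be natural numbers. Then there exist N ∈ ℕ, polynomials q_1, …, q_N ∈ ℝ[λ] with q_j(0) = 0, and indices i_1, …, i_N ∈ ℕ with i_j ≥ k + 1 for all j, such that exp(p₂·W_ℓ)·exp(p₁·W_k) = exp(p₁·W_k)·exp(p₂·W_ℓ)·exp(q_1·W_{i_1})·exp(q_2·W_{i_2})⋯exp(q_N·W_{i_N}) holds in Q. -/

import Mathlib

open Polynomial

/-- Relation on `D[λ]` whose ring-congruence closure corresponds to the two-sided ideal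
generated by `λ^{m₀+1}`; `Q := RingQuot (lamRel D m₀)` is the quotient `D[λ]/(λ^{m₀+1})`. -/
def lamRel (D : Type*) [Ring D] (m₀ : ℕ) : Polynomial D → Polynomial D → Prop :=
  fun a b => a = X ^ (m₀ + 1) ∧ b = 0

/-- The polynomial `p(λ)·W_i ∈ D[λ]` for `p ∈ ℝ[λ]`. -/
noncomputable def pW {D : Type*} [Ring D] [Algebra ℝ D] (W : ℕ → D)
    (p : Polynomial ℝ) (i : ℕ) : Polynomial D :=
  p.map (algebraMap ℝ D) * C (W i)

/-- The quotient map `D[λ] → Q = D[λ]/(λ^{m₀+1})`. -/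
noncomputable def toQ {D : Type*} [Ring D] [Algebra ℝ D] (m₀ : ℕ) :
    Polynomial D →+* RingQuot (lamRel D m₀) := RingQuot.mkRingHom _

/-- The truncated exponential `exp(u) = ∑_{j=0}^{m₀} u^j/j!` in `Q`. -/
noncomputable def expQ {D : Type*} [Ring D] [Algebra ℝ D] {m₀ : ℕ}
    (u : RingQuot (lamRel D m₀)) : RingQuot (lamRel D m₀) :=
  ∑ j ∈ Finset.range (m₀ + 1), (j.factorial : ℝ)⁻¹ • u ^ j

/-!
Logarithmic derivatives replace the Baker–Campbell–Hausdorff formula. Let `a = exp(p₁·W_k)` and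
`b = exp(p₂·W_ℓ)` with `k < ℓ`; the correcting factor `b⁻¹(a⁻¹ba)` has to be shown to lie in the
group `G` generated by the `exp(p·W_i)` with `i > k`. Let `L` be the span of the `p·W_i` with
`i > k`, and `E` the derivation `λ d/dλ` of `Q`. The units `u` that normalize `L` and satisfy
`u⁻¹E(u) ∈ L` form a group. It contains `G`, and also `a⁻¹ba`, since conjugation by `b⁻¹` moves
`a E(a⁻¹)`, a multiple of `W_k`, only by an element of `L`.

Conversely, such a unit with `u ≡ 1` modulo `λ` lies in `G`: if `u ≡ 1 + x` modulo `λ^{s+1}` with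
`x` divisible by `λ^s`, then `u⁻¹E(u) ≡ s·x`, so `x` agrees modulo `λ^{s+1}` with an element of
`L`. Its `λ^s` coefficient is thus a combination of the `W_i` with `i > k`, and the product of the
corresponding exponentials is an element of `G` congruent to `1 - x`, which brings `u` one power
of `λ` closer to `1`. Since `λ^{m₀+1} = 0`, this terminates.
-/

open IsNilpotent (exp)

section Exponential

variable {A : Type*} [Ring A] [Algebra ℚ A]

theorem commute_exp_of_commute {a b : A} (h : Commute a b) (ha : IsNilpotent a)
    (hb : IsNilpotent b) : Commute (exp a) (exp b) := by
  rw [Commute, SemiconjBy, ← IsNilpotent.exp_add_of_commute h ha hb, add_comm,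
    IsNilpotent.exp_add_of_commute h.symm hb ha]

theorem sq_dvd_exp_sub_one_add_self {v : A} (hv : IsNilpotent v) : v ^ 2 ∣ exp v - (1 + v) := by
  obtain ⟨n, hn⟩ := hv
  have hexp : exp v = ∑ j ∈ Finset.range n, ((j + 2).factorial : ℚ)⁻¹ • v ^ (j + 2) + v + 1 := by
    rw [IsNilpotent.exp_eq_sum (k := n + 2) (by rw [pow_add, hn, zero_mul]),
      Finset.sum_range_succ', Finset.sum_range_succ']
    simp
  rw [hexp, add_assoc, add_comm v, add_sub_cancel_right]
  exact Finset.dvd_sum fun j _ => ⟨((j + 2).factorial : ℚ)⁻¹ • v ^ j, by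
    rw [mul_smul_comm, ← pow_add, add_comm 2]⟩

theorem exp_mulLeft {v : A} (hv : IsNilpotent v) :
    exp (LinearMap.mulLeft ℚ v) = LinearMap.mulLeft ℚ (exp v) :=
  (IsNilpotent.map_exp hv (Algebra.lmul ℚ A)).symm

theorem exp_mulRight {v : A} (hv : IsNilpotent v) :
    exp (LinearMap.mulRight ℚ v) = LinearMap.mulRight ℚ (exp v) := by
  obtain ⟨n, hn⟩ := hv
  have hpow : LinearMap.mulRight ℚ v ^ n = 0 := by
    rw [LinearMap.pow_mulRight, hn, LinearMap.mulRight_zero_eq_zero]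
  ext x
  rw [IsNilpotent.exp_eq_sum hn, IsNilpotent.exp_eq_sum hpow]
  simp [LinearMap.pow_mulRight, Finset.mul_sum]

theorem isNilpotent_mulLeft_sub_mulRight {v : A} (hv : IsNilpotent v) :
    IsNilpotent (LinearMap.mulLeft ℚ v - LinearMap.mulRight ℚ v) :=
  (LinearMap.commute_mulLeft_right v v).isNilpotent_sub
    ((LinearMap.isNilpotent_mulLeft_iff ℚ v).mpr hv)
    ((LinearMap.isNilpotent_mulRight_iff ℚ v).mpr hv)

theorem exp_mulLeft_sub_mulRight_apply {v : A} (hv : IsNilpotent v) (x : A) :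
    exp (LinearMap.mulLeft ℚ v - LinearMap.mulRight ℚ v) x = exp v * x * exp (-v) := by
  have hneg : LinearMap.mulLeft ℚ v - LinearMap.mulRight ℚ v =
      LinearMap.mulLeft ℚ v + LinearMap.mulRight ℚ (-v) := by
    ext y
    simp [sub_eq_add_neg]
  rw [hneg, IsNilpotent.exp_add_of_commute (LinearMap.commute_mulLeft_right v (-v))
    ((LinearMap.isNilpotent_mulLeft_iff ℚ v).mpr hv)
    ((LinearMap.isNilpotent_mulRight_iff ℚ (-v)).mpr hv.neg), exp_mulLeft hv, exp_mulRight hv.neg]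
  simp [mul_assoc]

theorem exp_apply_sub_mem {M : Type*} [AddCommGroup M] [Module ℚ M] {φ : Module.End ℚ M}
    (hφ : IsNilpotent φ) {L : Submodule ℚ M} (hL : ∀ y ∈ L, φ y ∈ L) {x : M} (hx : φ x ∈ L) :
    exp φ x - x ∈ L := by
  obtain ⟨n, hn⟩ := hφ
  have hpow (j : ℕ) : (φ ^ (j + 1)) x ∈ L := by
    induction j with
    | zero => simpa using hx
    | succ j ih => rw [pow_succ', Module.End.mul_apply]; exact hL _ ih
  have hexp : exp φ x - x = ∑ j ∈ Finset.range n, ((j + 1).factorial : ℚ)⁻¹ • (φ ^ (j + 1)) x := by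
    rw [IsNilpotent.exp_eq_sum (k := n + 1) (by rw [pow_succ, hn, zero_mul]),
      Finset.sum_range_succ']
    simp
  rw [hexp]
  exact L.sum_mem fun j _ => L.smul_mem _ (hpow j)

/-- The exponential of a nilpotent element as a unit, with inverse `exp (-v)`. -/
noncomputable def expUnit (v : A) (hv : IsNilpotent v) : Aˣ where
  val := exp v
  inv := exp (-v)
  val_inv := hv.exp_mul_exp_neg_self
  inv_val := hv.exp_neg_mul_exp_self

@[simp]
theorem val_expUnit {v : A} (hv : IsNilpotent v) : (expUnit v hv : A) = exp v := rfl

theorem inv_expUnit {v : A} (hv : IsNilpotent v) : (expUnit v hv)⁻¹ = expUnit (-v) hv.neg :=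
  Units.ext rfl

theorem conj_expUnit_sub_mem {v : A} (hv : IsNilpotent v) {L : Submodule ℚ A}
    (hL : ∀ y ∈ L, v * y - y * v ∈ L) {x : A} (hx : v * x - x * v ∈ L) :
    ↑(expUnit v hv) * x * ↑(expUnit v hv)⁻¹ - x ∈ L := by
  rw [inv_expUnit, val_expUnit, val_expUnit, ← exp_mulLeft_sub_mulRight_apply hv]
  exact exp_apply_sub_mem (isNilpotent_mulLeft_sub_mulRight hv) hL hx

end Exponential

section Conjugation

variable {A : Type*} [Ring A]

/-- The units of `A` whose conjugation action maps the submodule `L` onto itself. -/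
def unitNormalizer {R : Type*} [Semiring R] [Module R A] (L : Submodule R A) : Subgroup Aˣ where
  carrier := {u | ∀ x, ↑u * x * ↑u⁻¹ ∈ L ↔ x ∈ L}
  one_mem' x := by simp
  mul_mem' {u v} hu hv x := by
    rw [← hv x, ← hu (v * x * ↑v⁻¹)]
    simp [mul_assoc]
  inv_mem' {u} hu x := by
    rw [← hu]
    simp [mul_assoc]

theorem expUnit_mem_unitNormalizer [Algebra ℚ A] {v : A} (hv : IsNilpotent v) {L : Submodule ℚ A}
    (hL : ∀ y ∈ L, v * y - y * v ∈ L) : expUnit v hv ∈ unitNormalizer L := by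
  have conj_mem {w : A} (hw : IsNilpotent w) (hwL : ∀ y ∈ L, w * y - y * w ∈ L) {x : A}
      (hx : x ∈ L) : ↑(expUnit w hw) * x * ↑(expUnit w hw)⁻¹ ∈ L :=
    (L.sub_mem_iff_left hx).mp (conj_expUnit_sub_mem hw hwL (hwL x hx))
  have hneg : ∀ y ∈ L, -v * y - y * -v ∈ L := fun y hy => by
    simpa [neg_add_eq_sub] using L.neg_mem (hL y hy)
  refine fun x => ⟨fun hx => ?_, conj_mem hv hL⟩
  simpa [← inv_expUnit hv, mul_assoc, -val_expUnit] using conj_mem hv.neg hneg hx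

end Conjugation

section LogDerivative

variable {A : Type*} [Ring A] {E : A →+ A}

/-- `E` is a derivation of the ring `A`; Mathlib's `Derivation` requires `A` to be commutative. -/
def IsLeibniz (E : A →+ A) : Prop := ∀ x y, E (x * y) = E x * y + x * E y

/-- The left logarithmic derivative `u⁻¹ E(u)` of a unit `u` with respect to a derivation `E`. -/
def leftLogDeriv (E : A →+ A) (u : Aˣ) : A := ↑u⁻¹ * E u

theorem IsLeibniz.map_one (hE : IsLeibniz E) : E 1 = 0 := by
  simpa using hE 1 1

theorem IsLeibniz.leftLogDeriv_one (hE : IsLeibniz E) : leftLogDeriv E 1 = 0 := by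
  simp [leftLogDeriv, hE.map_one]

theorem IsLeibniz.leftLogDeriv_mul (hE : IsLeibniz E) (u v : Aˣ) :
    leftLogDeriv E (u * v) = ↑v⁻¹ * leftLogDeriv E u * v + leftLogDeriv E v := by
  simp [leftLogDeriv, hE (u : A), mul_add, mul_assoc]

theorem IsLeibniz.leftLogDeriv_inv (hE : IsLeibniz E) (u : Aˣ) :
    leftLogDeriv E u⁻¹ = -(u * leftLogDeriv E u * ↑u⁻¹) := by
  have h := hE.leftLogDeriv_mul u u⁻¹
  rw [mul_inv_cancel, hE.leftLogDeriv_one, inv_inv] at h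
  exact (neg_eq_of_add_eq_zero_right h.symm).symm

theorem IsLeibniz.leftLogDeriv_conj (hE : IsLeibniz E) (u v : Aˣ) :
    leftLogDeriv E (u * v * u⁻¹) =
      u * (↑v⁻¹ * leftLogDeriv E u * v - leftLogDeriv E u + leftLogDeriv E v) * ↑u⁻¹ := by
  rw [hE.leftLogDeriv_mul, hE.leftLogDeriv_mul, hE.leftLogDeriv_inv, inv_inv]
  noncomm_ring

theorem IsLeibniz.map_pow_succ (hE : IsLeibniz E) {v : A} (hv : Commute v (E v)) (j : ℕ) :
    E (v ^ (j + 1)) = (j + 1) • (v ^ j * E v) := by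
  induction j with
  | zero => simp
  | succ j ih =>
    rw [pow_succ, hE, ih, smul_mul_assoc, mul_assoc, ← hv.eq, ← mul_assoc, ← pow_succ,
      succ_nsmul (v ^ (j + 1) * E v) (j + 1)]

theorem IsLeibniz.map_exp [Algebra ℚ A] (hE : IsLeibniz E) {v : A} (hv : IsNilpotent v)
    (hc : Commute v (E v)) : E (exp v) = exp v * E v := by
  obtain ⟨n, hn⟩ := hv
  have hterm (j : ℕ) : E (((j + 1).factorial : ℚ)⁻¹ • v ^ (j + 1)) =
      ((j.factorial : ℚ)⁻¹ • v ^ j) * E v := by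
    rw [map_rat_smul, hE.map_pow_succ hc, ← Nat.cast_smul_eq_nsmul ℚ, smul_smul, smul_mul_assoc,
      Nat.factorial_succ, Nat.cast_mul, mul_inv_rev, inv_mul_cancel_right₀ (by positivity)]
  rw [IsNilpotent.exp_eq_sum hn, Finset.sum_mul, ← Finset.sum_congr rfl fun j _ => hterm j,
    ← map_sum, ← sub_eq_zero, ← map_sub, ← IsNilpotent.exp_eq_sum hn,
    IsNilpotent.exp_eq_sum (k := n + 1) (by rw [pow_succ, hn, zero_mul]), Finset.sum_range_succ']
  simp [hE.map_one]

theorem IsLeibniz.leftLogDeriv_expUnit [Algebra ℚ A] (hE : IsLeibniz E) {v : A}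
    (hv : IsNilpotent v) (hc : Commute v (E v)) : leftLogDeriv E (expUnit v hv) = E v := by
  rw [leftLogDeriv, val_expUnit, hE.map_exp hv hc, ← val_expUnit hv, Units.inv_mul_cancel_left]

/-- The units that normalize `L` and have left logarithmic derivative in `L`. -/
def logDerivSubgroup {R : Type*} [Ring R] [Module R A] (hE : IsLeibniz E) (L : Submodule R A) :
    Subgroup Aˣ where
  carrier := {u | u ∈ unitNormalizer L ∧ leftLogDeriv E u ∈ L}
  one_mem' := ⟨one_mem _, by rw [hE.leftLogDeriv_one]; exact L.zero_mem⟩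
  mul_mem' {u v} hu hv := by
    refine ⟨mul_mem hu.1 hv.1, ?_⟩
    have hconj := (inv_mem hv.1 (leftLogDeriv E u)).mpr hu.2
    rw [inv_inv] at hconj
    rw [hE.leftLogDeriv_mul]
    exact L.add_mem hconj hv.2
  inv_mem' {u} hu := by
    refine ⟨inv_mem hu.1, ?_⟩
    rw [hE.leftLogDeriv_inv]
    exact L.neg_mem ((hu.1 _).mpr hu.2)

theorem conj_mem_logDerivSubgroup {R : Type*} [Ring R] [Module R A] (hE : IsLeibniz E)
    {L : Submodule R A} {u v : Aˣ} (hu : u ∈ unitNormalizer L) (hv : v ∈ logDerivSubgroup hE L)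
    (huv : ↑v⁻¹ * leftLogDeriv E u * v - leftLogDeriv E u ∈ L) :
    u * v * u⁻¹ ∈ logDerivSubgroup hE L := by
  refine ⟨mul_mem (mul_mem hu hv.1) (inv_mem hu), ?_⟩
  rw [hE.leftLogDeriv_conj]
  exact (hu _).mpr (L.add_mem huv hv.2)

end LogDerivative

section CentralDivisibility

theorem dvd_mul_left_of_commute {M : Type*} [Semigroup M] {a x : M} (ha : ∀ y, Commute a y)
    (h : a ∣ x) (y : M) : a ∣ y * x := by
  obtain ⟨z, rfl⟩ := h
  exact ⟨y * z, by rw [← mul_assoc, ← (ha y).eq, mul_assoc]⟩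

theorem mul_dvd_mul_of_commute {M : Type*} [Semigroup M] {a b x y : M} (hb : ∀ z, Commute b z)
    (hx : a ∣ x) (hy : b ∣ y) : a * b ∣ x * y := by
  obtain ⟨x, rfl⟩ := hx
  obtain ⟨y, rfl⟩ := hy
  exact ⟨x * y, by rw [mul_assoc, mul_assoc, ← mul_assoc x b, ← (hb x).eq, mul_assoc]⟩

theorem pow_succ_dvd_mul_of_dvd {M : Type*} [Monoid M] {t : M} (ht : ∀ y, Commute t y) {s : ℕ}
    {x y : M} (hx : t ^ s ∣ x) (hy : t ∣ y) : t ^ (s + 1) ∣ x * y := by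
  rw [pow_succ]
  exact mul_dvd_mul_of_commute ht hx hy

theorem pow_eq_zero_of_commute_of_dvd {M : Type*} [MonoidWithZero M] {t : M}
    (ht : ∀ y, Commute t y) {n : ℕ} (hn : t ^ n = 0) {x : M} (hx : t ∣ x) : x ^ n = 0 := by
  obtain ⟨y, rfl⟩ := hx
  rw [(ht y).mul_pow, hn, zero_mul]

variable {A : Type*} [Ring A] {t : A}

theorem pow_succ_dvd_mul_sub_one_add_add (ht : ∀ y, Commute t y) {s : ℕ} (hs : 1 ≤ s)
    {u v x y : A} (hx : t ^ s ∣ x) (hy : t ^ s ∣ y) (hu : t ^ (s + 1) ∣ u - (1 + x))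
    (hv : t ^ (s + 1) ∣ v - (1 + y)) : t ^ (s + 1) ∣ u * v - (1 + (x + y)) := by
  have hxy : t ^ (s + 1) ∣ x * y := pow_succ_dvd_mul_of_dvd ht hx
    ((dvd_pow_self t (by omega)).trans hy)
  have hleft : t ^ (s + 1) ∣ (1 + x) * (v - (1 + y)) :=
    dvd_mul_left_of_commute (fun z => (ht z).pow_left _) hv _
  have hsum := ((hu.mul_right v).add hleft).add hxy
  convert hsum using 1
  noncomm_ring

theorem pow_succ_dvd_exp_sub_one_add [Algebra ℚ A] (ht : ∀ y, Commute t y) {s : ℕ} (hs : 1 ≤ s)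
    {v : A} (hv : IsNilpotent v) (hdvd : t ^ s ∣ v) : t ^ (s + 1) ∣ exp v - (1 + v) := by
  have hsq : t ^ (s + 1) ∣ v ^ 2 := by
    rw [sq]
    exact pow_succ_dvd_mul_of_dvd ht hdvd ((dvd_pow_self t (by omega)).trans hdvd)
  exact hsq.trans (sq_dvd_exp_sub_one_add_self hv)

end CentralDivisibility

section EulerDerivation

variable {A : Type*} [Ring A] {t : A} {E : A →+ A}

/-- `E` behaves like the Euler derivation `t d/dt` along the `t`-adic filtration. -/
structure IsEulerDerivation (t : A) (E : A →+ A) : Prop where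
  isLeibniz : IsLeibniz E
  map_self : E t = t
  dvd_map : ∀ x, t ∣ E x

theorem IsEulerDerivation.map_pow (hE : IsEulerDerivation t E) (s : ℕ) :
    E (t ^ s) = s • t ^ s := by
  cases s with
  | zero => simp [hE.isLeibniz.map_one]
  | succ s =>
    rw [hE.isLeibniz.map_pow_succ (by rw [hE.map_self]), hE.map_self, pow_succ]

theorem IsEulerDerivation.pow_succ_dvd_map_sub (hE : IsEulerDerivation t E) {s : ℕ} {x : A}
    (hx : t ^ s ∣ x) : t ^ (s + 1) ∣ E x - s • x := by
  obtain ⟨y, rfl⟩ := hx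
  rw [hE.isLeibniz, hE.map_pow, smul_mul_assoc, add_sub_cancel_left, pow_succ]
  exact mul_dvd_mul_left _ (hE.dvd_map y)

theorem IsEulerDerivation.pow_succ_dvd_leftLogDeriv_sub (hE : IsEulerDerivation t E)
    (ht : ∀ y, Commute t y) {s : ℕ} {u : Aˣ} (hu : t ^ s ∣ (u : A) - 1) :
    t ^ (s + 1) ∣ leftLogDeriv E u - s • ((u : A) - 1) := by
  have hEu : t ^ (s + 1) ∣ E u - s • ((u : A) - 1) := by
    simpa [hE.isLeibniz.map_one] using hE.pow_succ_dvd_map_sub hu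
  have hmul : t ^ (s + 1) ∣ ((u : A) - 1) * E u := pow_succ_dvd_mul_of_dvd ht hu (hE.dvd_map u)
  have hinv : leftLogDeriv E u - E u = -(↑u⁻¹ * (((u : A) - 1) * E u)) := by
    rw [leftLogDeriv, sub_one_mul, mul_sub, Units.inv_mul_cancel_left, neg_sub]
  have hdiff : t ^ (s + 1) ∣ leftLogDeriv E u - E u := by
    rw [hinv]
    exact (dvd_mul_left_of_commute (fun z => (ht z).pow_left _) hmul _).neg_right
  simpa using hdiff.add hEu

theorem IsEulerDerivation.exists_mem_pow_succ_dvd_sub_one_add [Algebra ℚ A]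
    (hE : IsEulerDerivation t E) (ht : ∀ y, Commute t y) {s : ℕ} (hs : 1 ≤ s) {L : Submodule ℚ A}
    {u : Aˣ} (hu : leftLogDeriv E u ∈ L) (hdvd : t ^ s ∣ (u : A) - 1) :
    ∃ b ∈ L, t ^ s ∣ b ∧ t ^ (s + 1) ∣ (u : A) - 1 + b := by
  have hs0 : (s : ℚ) ≠ 0 := by positivity
  have hsum : (u : A) - 1 + -((s : ℚ)⁻¹ • leftLogDeriv E u) =
      -((s : ℚ)⁻¹ • (leftLogDeriv E u - s • ((u : A) - 1))) := by
    rw [← Nat.cast_smul_eq_nsmul ℚ, smul_sub, inv_smul_smul₀ hs0, neg_sub, ← sub_eq_add_neg]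
  have hlead : t ^ (s + 1) ∣ (u : A) - 1 + -((s : ℚ)⁻¹ • leftLogDeriv E u) := by
    rw [hsum]
    exact (dvd_smul_of_dvd _ (hE.pow_succ_dvd_leftLogDeriv_sub ht hdvd)).neg_right
  refine ⟨_, L.neg_mem (L.smul_mem _ hu), ?_, hlead⟩
  exact (dvd_add_right hdvd).mp ((pow_dvd_pow t s.le_succ).trans hlead)

theorem IsEulerDerivation.mem_of_mem_logDerivSubgroup [Algebra ℚ A] (hE : IsEulerDerivation t E)
    (ht : ∀ y, Commute t y) {n : ℕ} (hn : t ^ (n + 1) = 0) {L : Submodule ℚ A} {G : Subgroup Aˣ}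
    (hG : G ≤ logDerivSubgroup hE.isLeibniz L)
    (hlift : ∀ s, 1 ≤ s → s ≤ n → ∀ b ∈ L, t ^ s ∣ b → ∃ g ∈ G, t ^ (s + 1) ∣ (g : A) - (1 + b))
    {u : Aˣ} (hu : u ∈ logDerivSubgroup hE.isLeibniz L) (hdvd : t ∣ (u : A) - 1) : u ∈ G := by
  suffices ∀ v ∈ logDerivSubgroup hE.isLeibniz L, t ^ 1 ∣ (v : A) - 1 → v ∈ G from
    this u hu (by rwa [pow_one])
  refine Nat.decreasingInduction' (n := n + 1)
    (P := fun s => ∀ v ∈ logDerivSubgroup hE.isLeibniz L, t ^ s ∣ (v : A) - 1 → v ∈ G)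
    (fun s hsn hs ih v hv hvdvd => ?_) n.succ_pos fun v _ hvdvd => ?_
  · obtain ⟨b, hbL, hbdvd, hlead⟩ := hE.exists_mem_pow_succ_dvd_sub_one_add ht hs hv.2 hvdvd
    obtain ⟨g, hgG, hg⟩ := hlift s hs (Nat.le_of_lt_succ hsn) b hbL hbdvd
    have hvg : t ^ (s + 1) ∣ (↑(v * g) : A) - 1 := by
      have hmul := pow_succ_dvd_mul_sub_one_add_add (u := (v : A)) ht hs hvdvd hbdvd (by simp) hg
      simpa [sub_add_eq_sub_sub] using hmul.add hlead
    exact (mul_mem_cancel_right hgG).mp (ih _ (mul_mem hv (hG hgG)) hvg)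
  · rw [hn, zero_dvd_iff, sub_eq_zero, Units.val_eq_one] at hvdvd
    exact hvdvd ▸ one_mem G

end EulerDerivation

section CentralPolynomials

variable {R : Type*} [Semiring R]

theorem X_pow_dvd_monomial (n : ℕ) (r : R) : X ^ n ∣ monomial n r :=
  ⟨C r, by rw [X_pow_mul_C, C_mul_X_pow_eq_monomial]⟩

theorem isTwoSided_span_X_pow (n : ℕ) : (Ideal.span {(X : R[X]) ^ n}).IsTwoSided where
  mul_mem_of_left g hf := by
    obtain ⟨f, rfl⟩ := Ideal.mem_span_singleton'.mp hf
    rw [mul_assoc, (commute_X_pow g n).eq, ← mul_assoc]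
    exact Ideal.mul_mem_left _ _ (Ideal.mem_span_singleton_self _)

theorem X_pow_dvd_X_mul_derivative {n : ℕ} {f : R[X]} (h : X ^ n ∣ f) :
    X ^ n ∣ X * derivative f := by
  refine X_pow_dvd_iff.mpr fun d hd => ?_
  cases d with
  | zero => simp
  | succ d => rw [coeff_X_mul, coeff_derivative, X_pow_dvd_iff.mp h _ hd, zero_mul]

theorem X_pow_succ_dvd_sub_monomial {S : Type*} [Ring S] {s : ℕ} {f : S[X]} (h : X ^ s ∣ f) :
    X ^ (s + 1) ∣ f - monomial s (f.coeff s) := by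
  refine X_pow_dvd_iff.mpr fun d hd => ?_
  rcases (Nat.lt_succ_iff.mp hd).lt_or_eq with hds | rfl
  · simp [X_pow_dvd_iff.mp h d hds, coeff_monomial_of_ne _ hds.ne]
  · simp

theorem commute_map_algebraMap {R A : Type*} [CommSemiring R] [Semiring A] [Algebra R A]
    (p : R[X]) (f : A[X]) : Commute (p.map (algebraMap R A)) f := by
  induction p using Polynomial.induction_on' with
  | add p q hp hq => rw [Polynomial.map_add]; exact hp.add_left hq
  | monomial n r =>
    rw [map_monomial, ← C_mul_X_pow_eq_monomial, ← Polynomial.algebraMap_apply]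
    exact (Algebra.commute_algebraMap_left r f).mul_left (commute_X_pow f n)

end CentralPolynomials

section Quotient

variable {D : Type*} [Ring D] [Algebra ℝ D] {m₀ : ℕ}

theorem toQ_surjective : Function.Surjective (toQ (D := D) m₀) :=
  RingQuot.mkRingHom_surjective _

theorem commute_toQ_X (x : RingQuot (lamRel D m₀)) : Commute (toQ m₀ X) x := by
  obtain ⟨f, rfl⟩ := toQ_surjective x
  exact (commute_X f).map (toQ m₀)

theorem toQ_X_pow : toQ (D := D) m₀ X ^ (m₀ + 1) = 0 := by
  rw [← map_pow, ← map_zero (toQ m₀)]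
  exact RingQuot.mkRingHom_rel ⟨rfl, rfl⟩

theorem toQ_eq_zero_iff {f : D[X]} : toQ m₀ f = 0 ↔ X ^ (m₀ + 1) ∣ f := by
  refine ⟨fun h => ?_, fun ⟨g, hg⟩ => by rw [hg, map_mul, map_pow, toQ_X_pow, zero_mul]⟩
  have : (Ideal.span {(X : D[X]) ^ (m₀ + 1)}).IsTwoSided := isTwoSided_span_X_pow _
  let π := Ideal.Quotient.mk (Ideal.span {(X : D[X]) ^ (m₀ + 1)})
  have hπ ⦃a b : D[X]⦄ (hab : lamRel D m₀ a b) : π a = π b := by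
    rw [hab.1, hab.2, map_zero, Ideal.Quotient.eq_zero_iff_mem]
    exact Ideal.mem_span_singleton_self _
  have hf : π f = 0 := by
    rw [← RingQuot.lift_mkRingHom_apply π hπ f]
    exact (congrArg _ h).trans (map_zero _)
  obtain ⟨g, rfl⟩ := Ideal.mem_span_singleton'.mp (Ideal.Quotient.eq_zero_iff_mem.mp hf)
  exact ⟨g, ((commute_X_pow g _).eq).symm⟩

theorem X_pow_dvd_of_toQ_X_pow_dvd {s : ℕ} (hs : s ≤ m₀ + 1) {f : D[X]}
    (h : toQ m₀ X ^ s ∣ toQ m₀ f) : X ^ s ∣ f := by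
  obtain ⟨y, hy⟩ := h
  obtain ⟨g, rfl⟩ := toQ_surjective y
  rw [← map_pow, ← map_mul, ← sub_eq_zero, ← map_sub, toQ_eq_zero_iff] at hy
  exact (dvd_sub_left (dvd_mul_right _ _)).mp ((pow_dvd_pow X hs).trans hy)

theorem toQ_X_pow_succ_dvd_sub_monomial {s : ℕ} (hs : s ≤ m₀) {f : D[X]}
    (h : toQ m₀ X ^ s ∣ toQ m₀ f) :
    toQ m₀ X ^ (s + 1) ∣ toQ m₀ f - toQ m₀ (monomial s (f.coeff s)) := by
  rw [← map_pow, ← map_sub]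
  exact map_dvd _ (X_pow_succ_dvd_sub_monomial (X_pow_dvd_of_toQ_X_pow_dvd (hs.trans m₀.le_succ) h))

/-- The derivation of `D[λ]/(λ^{m₀+1})` induced by `λ d/dλ`. Unlike `d/dλ`, it
preserves the ideal generated by `λ^{m₀+1}`. -/
noncomputable def eulerQ : RingQuot (lamRel D m₀) →+ RingQuot (lamRel D m₀) :=
  (toQ m₀ : D[X] →+* _).toAddMonoidHom.liftOfSurjective toQ_surjective
    ⟨(toQ m₀ : D[X] →+* _).toAddMonoidHom.comp
      ((AddMonoidHom.mulLeft X).comp (derivative (R := D)).toAddMonoidHom), fun _ hf =>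
      toQ_eq_zero_iff.mpr (X_pow_dvd_X_mul_derivative (toQ_eq_zero_iff.mp hf))⟩

theorem eulerQ_toQ (f : D[X]) : eulerQ (toQ m₀ f) = toQ m₀ (X * derivative f) :=
  AddMonoidHom.liftOfRightInverse_comp_apply _ _ _ _ f

theorem isEulerDerivation_eulerQ : IsEulerDerivation (toQ (D := D) m₀ X) eulerQ where
  isLeibniz x y := by
    obtain ⟨f, rfl⟩ := toQ_surjective x
    obtain ⟨g, rfl⟩ := toQ_surjective y
    rw [← map_mul, eulerQ_toQ, eulerQ_toQ, eulerQ_toQ, ← map_mul, ← map_mul, ← map_add,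
      derivative_mul, mul_add, mul_assoc, ← mul_assoc X f, (commute_X f).eq, mul_assoc]
  map_self := by simp [eulerQ_toQ]
  dvd_map x := by
    obtain ⟨f, rfl⟩ := toQ_surjective x
    rw [eulerQ_toQ, map_mul]
    exact dvd_mul_right _ _

theorem expQ_eq_exp [Algebra ℚ D] {u : RingQuot (lamRel D m₀)} (hu : u ^ (m₀ + 1) = 0) :
    expQ u = exp u := by
  rw [IsNilpotent.exp_eq_sum hu, expQ]
  refine Finset.sum_congr rfl fun j _ => ?_
  rw [← Rat.cast_smul_eq_qsmul ℝ, Rat.cast_inv, Rat.cast_natCast]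

end Quotient

section ListProd

theorem exists_eq_prod_map_range_of_mem_closure {M : Type*} [Monoid M] {s : Set M}
    (h1 : 1 ∈ s) {x : M} (hx : x ∈ Submonoid.closure s) :
    ∃ (N : ℕ) (y : ℕ → M), (∀ j, y j ∈ s) ∧ ((List.range N).map y).prod = x := by
  obtain ⟨l, hl, rfl⟩ := Submonoid.exists_list_of_mem_closure hx
  refine ⟨l.length, fun j => l.getD j 1, fun j => ?_, ?_⟩
  · rcases lt_or_ge j l.length with hj | hj
    · simpa [hj] using hl _ (List.getElem_mem hj)
    · simpa [hj] using h1
  · congr 1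
    exact List.ext_getElem (by simp) fun j _ hj => by simp [hj]

end ListProd

section WittPolynomial

variable {D : Type*} [Ring D] [Algebra ℝ D] (W : ℕ → D)

theorem pW_mul_pW (p q : ℝ[X]) (i j : ℕ) :
    pW W p i * pW W q j = (p * q).map (algebraMap ℝ D) * C (W i * W j) := by
  rw [pW, pW, mul_assoc, ← mul_assoc (C (W i)), ← (commute_map_algebraMap q (C (W i))).eq,
    Polynomial.map_mul, C_mul, mul_assoc, mul_assoc]

theorem commute_pW_pW (p q : ℝ[X]) (i : ℕ) : Commute (pW W p i) (pW W q i) := by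
  rw [Commute, SemiconjBy, pW_mul_pW, pW_mul_pW, mul_comm]

variable {W} in
theorem pW_mul_sub_pW_mul {α : ℕ → ℕ → ℝ}
    (hW : ∀ n m : ℕ, W n * W m - W m * W n = α n m • W (n + m)) (p q : ℝ[X]) (i j : ℕ) :
    pW W p i * pW W q j - pW W q j * pW W p i = pW W (α i j • (p * q)) (i + j) := by
  rw [pW_mul_pW, pW_mul_pW, mul_comm q, ← mul_sub, ← C_sub, hW, pW]
  ext n
  rw [coeff_mul_C, coeff_mul_C, coeff_map, coeff_map, coeff_smul, smul_eq_mul, map_mul,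
    Algebra.smul_def, Algebra.left_comm, mul_assoc]

theorem X_mul_derivative_pW (p : ℝ[X]) (i : ℕ) :
    X * derivative (pW W p i) = pW W (X * derivative p) i := by
  simp [pW, derivative_mul, derivative_map, mul_assoc]

theorem monomial_coeff_pW (p : ℝ[X]) (i s : ℕ) :
    monomial s ((pW W p i).coeff s) = pW W (monomial s (p.coeff s)) i := by
  simp [pW]

theorem X_pow_dvd_pW {s : ℕ} {p : ℝ[X]} (hp : X ^ s ∣ p) (i : ℕ) : X ^ s ∣ pW W p i := by
  simpa [pW] using (map_dvd (mapRingHom (algebraMap ℝ D)) hp).mul_right (C (W i))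

end WittPolynomial

section WittTerm

variable {D : Type*} [Ring D] [Algebra ℝ D] [Algebra ℚ D] (W : ℕ → D) (m₀ : ℕ)

/-- The image of `p(λ)·W_i` in `D[λ]/(λ^{m₀+1})`, as a linear function of `p`. -/
noncomputable def wittTerm (i : ℕ) : ℝ[X] →ₗ[ℚ] RingQuot (lamRel D m₀) :=
  ((toQ m₀ : D[X] →+* _).toAddMonoidHom.comp ((AddMonoidHom.mulRight (C (W i))).comp
    (mapRingHom (algebraMap ℝ D)).toAddMonoidHom)).toRatLinearMap

theorem wittTerm_apply (i : ℕ) (p : ℝ[X]) : wittTerm W m₀ i p = toQ m₀ (pW W p i) := rfl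

theorem commute_wittTerm (i : ℕ) (p q : ℝ[X]) :
    Commute (wittTerm W m₀ i p) (wittTerm W m₀ i q) :=
  (commute_pW_pW W p q i).map (toQ m₀)

variable {W} in
theorem wittTerm_mul_sub_wittTerm_mul {α : ℕ → ℕ → ℝ}
    (hW : ∀ n m : ℕ, W n * W m - W m * W n = α n m • W (n + m)) (i j : ℕ) (p q : ℝ[X]) :
    wittTerm W m₀ i p * wittTerm W m₀ j q - wittTerm W m₀ j q * wittTerm W m₀ i p =
      wittTerm W m₀ (i + j) (α i j • (p * q)) := by
  simp only [wittTerm_apply, ← map_mul, ← map_sub, pW_mul_sub_pW_mul hW]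

theorem eulerQ_wittTerm (i : ℕ) (p : ℝ[X]) :
    eulerQ (wittTerm W m₀ i p) = wittTerm W m₀ i (X * derivative p) := by
  rw [wittTerm_apply, eulerQ_toQ, X_mul_derivative_pW, wittTerm_apply]

theorem toQ_X_pow_dvd_wittTerm {s : ℕ} {p : ℝ[X]} (hp : X ^ s ∣ p) (i : ℕ) :
    toQ m₀ X ^ s ∣ wittTerm W m₀ i p := by
  rw [← map_pow]
  exact map_dvd _ (X_pow_dvd_pW W hp i)

theorem toQ_X_dvd_wittTerm {p : ℝ[X]} (hp : p.eval 0 = 0) (i : ℕ) :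
    toQ m₀ X ∣ wittTerm W m₀ i p := by
  have hX : X ^ 1 ∣ p := by rwa [pow_one, X_dvd_iff, coeff_zero_eq_eval_zero]
  simpa using toQ_X_pow_dvd_wittTerm W m₀ hX i

theorem wittTerm_pow_eq_zero {p : ℝ[X]} (hp : p.eval 0 = 0) (i : ℕ) :
    wittTerm W m₀ i p ^ (m₀ + 1) = 0 :=
  pow_eq_zero_of_commute_of_dvd commute_toQ_X toQ_X_pow (toQ_X_dvd_wittTerm W m₀ hp i)

theorem isNilpotent_wittTerm {p : ℝ[X]} (hp : p.eval 0 = 0) (i : ℕ) :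
    IsNilpotent (wittTerm W m₀ i p) :=
  ⟨m₀ + 1, wittTerm_pow_eq_zero W m₀ hp i⟩

/-- The span of the elements `p(λ)·W_i` with `i > k` in `D[λ]/(λ^{m₀+1})`. -/
noncomputable def wittSpan (k : ℕ) : Submodule ℚ (RingQuot (lamRel D m₀)) :=
  ⨆ i : Set.Ioi k, LinearMap.range (wittTerm W m₀ i)

variable {k : ℕ}

theorem wittTerm_mem_wittSpan {i : ℕ} (hi : k < i) (p : ℝ[X]) :
    wittTerm W m₀ i p ∈ wittSpan W m₀ k :=
  Submodule.mem_iSup_of_mem (⟨i, hi⟩ : Set.Ioi k) (LinearMap.mem_range_self _ p)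

variable {W} in
theorem wittTerm_mul_sub_mul_mem_wittSpan {α : ℕ → ℕ → ℝ}
    (hW : ∀ n m : ℕ, W n * W m - W m * W n = α n m • W (n + m)) (i : ℕ) (p : ℝ[X])
    {y : RingQuot (lamRel D m₀)} (hy : y ∈ wittSpan W m₀ k) :
    wittTerm W m₀ i p * y - y * wittTerm W m₀ i p ∈ wittSpan W m₀ k := by
  induction hy using Submodule.iSup_induction' with
  | mem j y hy =>
    obtain ⟨q, rfl⟩ := hy
    rw [wittTerm_mul_sub_wittTerm_mul m₀ hW]
    exact wittTerm_mem_wittSpan W m₀ (j.2.trans_le (Nat.le_add_left _ _)) _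
  | zero => simp
  | add y z _ _ hy hz =>
    convert add_mem hy hz using 1
    noncomm_ring

end WittTerm

section WittExp

variable {D : Type*} [Ring D] [Algebra ℝ D] [Algebra ℚ D] (W : ℕ → D) (m₀ : ℕ)

/-- The exponential `exp(p·W_i)` as a unit of `D[λ]/(λ^{m₀+1})`. -/
noncomputable def wittExp (i : ℕ) (p : ℝ[X]) (hp : p.eval 0 = 0) : (RingQuot (lamRel D m₀))ˣ :=
  expUnit (wittTerm W m₀ i p) (isNilpotent_wittTerm W m₀ hp i)

theorem val_wittExp (i : ℕ) {p : ℝ[X]} (hp : p.eval 0 = 0) :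
    (wittExp W m₀ i p hp : RingQuot (lamRel D m₀)) = expQ (toQ m₀ (pW W p i)) :=
  (expQ_eq_exp (wittTerm_pow_eq_zero W m₀ hp i)).symm

theorem wittExp_zero (i : ℕ) : wittExp W m₀ i 0 eval_zero = 1 :=
  Units.ext (by simp [wittExp])

theorem inv_wittExp (i : ℕ) {p : ℝ[X]} (hp : p.eval 0 = 0) :
    (wittExp W m₀ i p hp)⁻¹ = wittExp W m₀ i (-p) (by simpa using hp) :=
  Units.ext (by rw [wittExp, inv_expUnit]; simp [wittExp])

theorem commute_wittExp (i : ℕ) {p q : ℝ[X]} (hp : p.eval 0 = 0) (hq : q.eval 0 = 0) :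
    Commute (wittExp W m₀ i p hp) (wittExp W m₀ i q hq) :=
  Units.ext (commute_exp_of_commute (commute_wittTerm W m₀ i p q)
    (isNilpotent_wittTerm W m₀ hp i) (isNilpotent_wittTerm W m₀ hq i))

theorem leftLogDeriv_wittExp (i : ℕ) {p : ℝ[X]} (hp : p.eval 0 = 0) :
    leftLogDeriv eulerQ (wittExp W m₀ i p hp) = wittTerm W m₀ i (X * derivative p) := by
  rw [← eulerQ_wittTerm]
  refine isEulerDerivation_eulerQ.isLeibniz.leftLogDeriv_expUnit _ ?_
  rw [eulerQ_wittTerm]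
  exact commute_wittTerm W m₀ i _ _

theorem pow_succ_dvd_wittExp_sub_one_add {s : ℕ} (hs : 1 ≤ s) {p : ℝ[X]} (hp : p.eval 0 = 0)
    (hdvd : X ^ s ∣ p) (i : ℕ) :
    toQ m₀ X ^ (s + 1) ∣
      (wittExp W m₀ i p hp : RingQuot (lamRel D m₀)) - (1 + wittTerm W m₀ i p) :=
  pow_succ_dvd_exp_sub_one_add commute_toQ_X hs (isNilpotent_wittTerm W m₀ hp i)
    (toQ_X_pow_dvd_wittTerm W m₀ hdvd i)

theorem toQ_X_dvd_wittExp_sub_one {p : ℝ[X]} (hp : p.eval 0 = 0) (i : ℕ) :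
    toQ m₀ X ∣ (wittExp W m₀ i p hp : RingQuot (lamRel D m₀)) - 1 := by
  have hX : X ^ 1 ∣ p := by rwa [pow_one, X_dvd_iff, coeff_zero_eq_eval_zero]
  have hexp := pow_succ_dvd_wittExp_sub_one_add W m₀ le_rfl hp hX i
  simpa [sub_add_eq_sub_sub] using
    ((dvd_pow_self _ two_ne_zero).trans hexp).add (toQ_X_dvd_wittTerm W m₀ hp i)

/-- The exponentials `exp(p·W_i)` with `p(0) = 0` and `i > k`. -/
def wittExpSet (k : ℕ) : Set (RingQuot (lamRel D m₀))ˣ :=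
  {u | ∃ (p : ℝ[X]) (i : ℕ) (hp : p.eval 0 = 0), k + 1 ≤ i ∧ u = wittExp W m₀ i p hp}

variable {k : ℕ}

theorem one_mem_wittExpSet : 1 ∈ wittExpSet W m₀ k :=
  ⟨0, k + 1, eval_zero, le_rfl, (wittExp_zero W m₀ _).symm⟩

theorem inv_mem_wittExpSet {u : (RingQuot (lamRel D m₀))ˣ} (hu : u ∈ wittExpSet W m₀ k) :
    u⁻¹ ∈ wittExpSet W m₀ k := by
  obtain ⟨p, i, hp, hi, rfl⟩ := hu
  exact ⟨-p, i, _, hi, inv_wittExp W m₀ i hp⟩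

/-- The group generated by the exponentials `exp(p·W_i)` with `p(0) = 0` and `i > k`. -/
noncomputable def wittGroup (k : ℕ) : Subgroup (RingQuot (lamRel D m₀))ˣ :=
  Subgroup.closure (wittExpSet W m₀ k)

theorem wittExp_mem_wittGroup {i : ℕ} (hi : k < i) {p : ℝ[X]} (hp : p.eval 0 = 0) :
    wittExp W m₀ i p hp ∈ wittGroup W m₀ k :=
  Subgroup.subset_closure ⟨p, i, hp, hi, rfl⟩

theorem wittGroup_toSubmonoid :
    (wittGroup W m₀ k).toSubmonoid = Submonoid.closure (wittExpSet W m₀ k) := by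
  have hinv : (wittExpSet W m₀ k)⁻¹ ⊆ wittExpSet W m₀ k := fun u hu => by
    simpa using inv_mem_wittExpSet W m₀ hu
  rw [wittGroup, Subgroup.closure_toSubmonoid, Set.union_eq_self_of_subset_right hinv]

theorem exists_mem_wittGroup_dvd_sub_one_add_monomial {s : ℕ} (hs : 1 ≤ s)
    {b : RingQuot (lamRel D m₀)} (hb : b ∈ wittSpan W m₀ k) :
    ∃ f : D[X], toQ m₀ f = b ∧ ∃ g ∈ wittGroup W m₀ k,
      toQ m₀ X ^ (s + 1) ∣
        (g : RingQuot (lamRel D m₀)) - (1 + toQ m₀ (monomial s (f.coeff s))) := by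
  induction hb using Submodule.iSup_induction' with
  | mem i b hb =>
    obtain ⟨p, rfl⟩ := hb
    have hp : (monomial s (p.coeff s)).eval 0 = 0 := by simp [Nat.one_le_iff_ne_zero.mp hs]
    refine ⟨pW W p i, rfl, _, wittExp_mem_wittGroup W m₀ i.2 hp, ?_⟩
    rw [monomial_coeff_pW]
    exact pow_succ_dvd_wittExp_sub_one_add W m₀ hs hp (X_pow_dvd_monomial s _) i
  | zero => exact ⟨0, map_zero _, 1, one_mem _, by simp⟩
  | add b c _ _ hb hc =>
    obtain ⟨f, rfl, g, hg, hfg⟩ := hb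
    obtain ⟨f', rfl, g', hg', hfg'⟩ := hc
    have hdvd (d : D) : toQ m₀ X ^ s ∣ toQ m₀ (monomial s d) := by
      rw [← map_pow]
      exact map_dvd _ (X_pow_dvd_monomial s d)
    refine ⟨f + f', map_add _ _ _, g * g', mul_mem hg hg', ?_⟩
    simpa using pow_succ_dvd_mul_sub_one_add_add commute_toQ_X hs (hdvd _) (hdvd _) hfg hfg'

theorem exists_mem_wittGroup_pow_succ_dvd {s : ℕ} (hs : 1 ≤ s) (hsm : s ≤ m₀)
    {b : RingQuot (lamRel D m₀)} (hb : b ∈ wittSpan W m₀ k) (hdvd : toQ m₀ X ^ s ∣ b) :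
    ∃ g ∈ wittGroup W m₀ k, toQ m₀ X ^ (s + 1) ∣ (g : RingQuot (lamRel D m₀)) - (1 + b) := by
  obtain ⟨f, rfl, g, hg, hgf⟩ := exists_mem_wittGroup_dvd_sub_one_add_monomial W m₀ hs hb
  refine ⟨g, hg, ?_⟩
  convert hgf.sub (toQ_X_pow_succ_dvd_sub_monomial hsm hdvd) using 1
  abel

end WittExp

section Reordering

variable {D : Type*} [Ring D] [Algebra ℝ D] [Algebra ℚ D] {W : ℕ → D} {α : ℕ → ℕ → ℝ}
  (hW : ∀ n m : ℕ, W n * W m - W m * W n = α n m • W (n + m)) (m₀ : ℕ) {k : ℕ} {p q : ℝ[X]}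
  (hp : p.eval 0 = 0) (hq : q.eval 0 = 0)

include hW

theorem wittExp_mem_unitNormalizer (i : ℕ) :
    wittExp W m₀ i p hp ∈ unitNormalizer (wittSpan W m₀ k) :=
  expUnit_mem_unitNormalizer _ fun _ hy => wittTerm_mul_sub_mul_mem_wittSpan m₀ hW i p hy

theorem wittExp_mem_logDerivSubgroup {i : ℕ} (hi : k < i) :
    wittExp W m₀ i p hp ∈
      logDerivSubgroup isEulerDerivation_eulerQ.isLeibniz (wittSpan W m₀ k) :=
  ⟨wittExp_mem_unitNormalizer hW m₀ hp i, by
    rw [leftLogDeriv_wittExp]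
    exact wittTerm_mem_wittSpan W m₀ hi _⟩

theorem wittGroup_le_logDerivSubgroup :
    wittGroup W m₀ k ≤ logDerivSubgroup isEulerDerivation_eulerQ.isLeibniz (wittSpan W m₀ k) := by
  refine (Subgroup.closure_le _).mpr ?_
  rintro _ ⟨p, i, hp, hi, rfl⟩
  exact wittExp_mem_logDerivSubgroup hW m₀ hp hi

theorem wittExp_inv_conj_wittTerm_sub_mem {ℓ : ℕ} (hkℓ : k < ℓ) :
    ↑(wittExp W m₀ ℓ q hq)⁻¹ * wittTerm W m₀ k p * wittExp W m₀ ℓ q hq - wittTerm W m₀ k p ∈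
      wittSpan W m₀ k := by
  rw [← inv_inv (wittExp W m₀ ℓ q hq), inv_inv (wittExp W m₀ ℓ q hq)⁻¹, inv_wittExp]
  refine conj_expUnit_sub_mem _ (fun _ hy => wittTerm_mul_sub_mul_mem_wittSpan m₀ hW ℓ _ hy) ?_
  rw [wittTerm_mul_sub_wittTerm_mul m₀ hW]
  exact wittTerm_mem_wittSpan W m₀ (Nat.lt_add_right k hkℓ) _

theorem wittExp_conj_mem_wittGroup {ℓ : ℕ} (hkℓ : k < ℓ) :
    wittExp W m₀ k p hp * wittExp W m₀ ℓ q hq * (wittExp W m₀ k p hp)⁻¹ ∈ wittGroup W m₀ k := by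
  refine isEulerDerivation_eulerQ.mem_of_mem_logDerivSubgroup commute_toQ_X toQ_X_pow
    (wittGroup_le_logDerivSubgroup hW m₀)
    (fun s hs hsm b hb hdvd => exists_mem_wittGroup_pow_succ_dvd W m₀ hs hsm hb hdvd)
    (conj_mem_logDerivSubgroup _ (wittExp_mem_unitNormalizer hW m₀ hp k)
      (wittExp_mem_logDerivSubgroup hW m₀ hq hkℓ) ?_) ?_
  · rw [leftLogDeriv_wittExp]
    exact wittExp_inv_conj_wittTerm_sub_mem hW m₀ hq hkℓ
  · have hconj := dvd_mul_left_of_commute commute_toQ_X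
      ((toQ_X_dvd_wittExp_sub_one W m₀ hq ℓ).mul_right ↑(wittExp W m₀ k p hp)⁻¹)
      (wittExp W m₀ k p hp : RingQuot (lamRel D m₀))
    simpa [mul_sub, sub_mul, mul_assoc] using hconj

theorem exists_mem_wittGroup_wittExp_mul_eq {ℓ : ℕ} (hkℓ : k ≤ ℓ) :
    ∃ g ∈ wittGroup W m₀ k, wittExp W m₀ ℓ q hq * wittExp W m₀ k p hp =
      wittExp W m₀ k p hp * wittExp W m₀ ℓ q hq * g := by
  rcases hkℓ.eq_or_lt with rfl | hlt
  · exact ⟨1, one_mem _, by rw [mul_one, (commute_wittExp W m₀ k hq hp).eq]⟩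
  · refine ⟨(wittExp W m₀ ℓ q hq)⁻¹ *
      ((wittExp W m₀ k p hp)⁻¹ * wittExp W m₀ ℓ q hq * wittExp W m₀ k p hp),
      mul_mem (inv_mem (wittExp_mem_wittGroup W m₀ hlt hq)) ?_, by group⟩
    have hconj := wittExp_conj_mem_wittGroup hW m₀ (p := -p) (by simpa using hp) hq hlt
    rwa [← inv_wittExp W m₀ k hp, inv_inv] at hconj

end Reordering

/-- Under the Witt condition, two exponential factors can be reordered in `Q` at the
cost of a finite product of exponentials of single terms with strictly larger indices:
`exp(p₂·W_ℓ)·exp(p₁·W_k) = exp(p₁·W_k)·exp(p₂·W_ℓ)·exp(q₁·W_{i₁})⋯exp(q_N·W_{i_N})`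
with `q_j(0) = 0` and `i_j ≥ k + 1`. -/
theorem witt_exp_reorder {D : Type*} [Ring D] [Algebra ℝ D]
    (W : ℕ → D) (α : ℕ → ℕ → ℝ)
    (hW : ∀ n m : ℕ, W n * W m - W m * W n = α n m • W (n + m))
    (m₀ : ℕ) (hm₀ : 1 ≤ m₀) (k ℓ : ℕ) (hkl : k ≤ ℓ)
    (p₁ p₂ : Polynomial ℝ) (hp₁ : p₁.eval 0 = 0) (hp₂ : p₂.eval 0 = 0) :
    ∃ (N : ℕ) (q : ℕ → Polynomial ℝ) (idx : ℕ → ℕ),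
      (∀ j, (q j).eval 0 = 0) ∧
      (∀ j, k + 1 ≤ idx j) ∧
      expQ (toQ m₀ (pW W p₂ ℓ)) * expQ (toQ m₀ (pW W p₁ k)) =
        expQ (toQ m₀ (pW W p₁ k)) * expQ (toQ m₀ (pW W p₂ ℓ)) *
          ((List.range N).map fun j => expQ (toQ m₀ (pW W (q j) (idx j)))).prod := by
  let : Algebra ℚ D := Algebra.compHom D (algebraMap ℚ ℝ)
  obtain ⟨g, hg, hreorder⟩ := exists_mem_wittGroup_wittExp_mul_eq hW m₀ hp₁ hp₂ hkl
  rw [← Subgroup.mem_toSubmonoid, wittGroup_toSubmonoid] at hg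
  obtain ⟨N, y, hy, rfl⟩ :=
    exists_eq_prod_map_range_of_mem_closure (one_mem_wittExpSet W m₀) hg
  choose q idx hq hidx hexp using hy
  refine ⟨N, q, idx, hq, hidx, ?_⟩
  have hprod : (((List.range N).map y).prod : RingQuot (lamRel D m₀)) =
      ((List.range N).map fun j => expQ (toQ m₀ (pW W (q j) (idx j)))).prod := by
    simpa [Function.comp_def, hexp, val_wittExp] using
      map_list_prod (Units.coeHom (RingQuot (lamRel D m₀))) ((List.range N).map y)
  simpa [hprod, val_wittExp] using congrArg Units.val hreorder
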